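/- arXiv:2106.02755 — 2 statements merged into one kernel-verified Lean document; each statement's English description precedes it below -/
import Mathlib

section
/- There is a universal constant C > 0 such that the following holds. Let μ be a Borel probability measure on ℝ^d supported in the closed ball of radius R centered at the origin, and let K(x,y) = ∫ cos(⟨ω, x−y⟩) dμ(ω). Then for every ε ∈ (0,1) there exists a polynomial kernel P of degree at most C·(R² + log(1/ε)) such that |K(x,y) − P(x,y)| ≤ ε for all x, y ∈ 𝔹^d. -/
open MeasureTheory
open scoped RealInnerProductSpace

/-- Multi-indices in `d` variables of total degree at most `n`. -/
abbrev MIdx (d n : ℕ) := {a : Fin d → Fin (n + 1) // ∑ i, (a i : ℕ) ≤ n}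

/-- The polynomial kernel `P(x,y) = Σ_{|α|≤n, |β|≤n} c_{αβ} x^α y^β` of degree at most `n`
on Euclidean space, determined by the coefficient matrix `c`. -/
noncomputable def polyKer {d n : ℕ} (c : MIdx d n → MIdx d n → ℝ)
    (x y : EuclideanSpace ℝ (Fin d)) : ℝ :=
  ∑ a : MIdx d n, ∑ b : MIdx d n,
    c a b * ((∏ i, x i ^ (a.1 i : ℕ)) * ∏ i, y i ^ (b.1 i : ℕ))

/-!
Truncating the Taylor series of `cos` after degree `n` turns `K` into a polynomial kernel of degree
at most `n`: `⟪ω, x - y⟫ ^ m` is a polynomial of degree `m` in the `2d` variables `(x, y)`, and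
integrating over `ω` only affects its coefficients. Since `|⟪ω, x - y⟫| ≤ 2R`, the truncation error
is at most `∑_{m > n} (2R)^m / m!`, which a Chernoff bound controls by `exp (2eR - (n + 1))`. With
`L = log (1/ε)` it therefore suffices that `6R + L ≤ n + 1`, and by AM-GM
`6R + L ≤ 1/2 + 18(R² + L) ≤ max 1 (36(R² + L))`, so `n = ⌊36(R² + L)⌋` works.
-/

section PolynomialKernels

variable {d n : ℕ}

/-- `polyKer` as a linear map in the coefficient matrix, from which polynomial kernels inherit their
closure under linear combinations. -/
noncomputable def polyKerLinearMap (d n : ℕ) :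
    (MIdx d n → MIdx d n → ℝ) →ₗ[ℝ]
      EuclideanSpace ℝ (Fin d) → EuclideanSpace ℝ (Fin d) → ℝ where
  toFun := polyKer
  map_add' c c' := by
    funext x y
    simp only [polyKer, Pi.add_apply, add_mul, Finset.sum_add_distrib]
  map_smul' r c := by
    funext x y
    simp only [polyKer, Pi.smul_apply, smul_eq_mul, mul_assoc, Finset.mul_sum, RingHom.id_apply]

/-- The space of polynomial kernels of degree at most `n` on `ℝ^d`. Coefficient matrices are not
required to be symmetric here. -/
noncomputable def polyKerSpace (d n : ℕ) :
    Submodule ℝ (EuclideanSpace ℝ (Fin d) → EuclideanSpace ℝ (Fin d) → ℝ) :=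
  LinearMap.range (polyKerLinearMap d n)

lemma monomial_mem_polyKerSpace {α β : Fin d → ℕ} (hα : ∑ i, α i ≤ n) (hβ : ∑ i, β i ≤ n) :
    (fun x y => (∏ i, x i ^ α i) * ∏ i, y i ^ β i) ∈ polyKerSpace d n := by
  classical
  have coord_lt {γ : Fin d → ℕ} (hγ : ∑ i, γ i ≤ n) (i : Fin d) : γ i < n + 1 :=
    Nat.lt_succ_of_le ((Finset.single_le_sum_of_canonicallyOrdered (Finset.mem_univ i)).trans hγ)
  let a : MIdx d n := ⟨fun i => ⟨α i, coord_lt hα i⟩, hα⟩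
  let b : MIdx d n := ⟨fun i => ⟨β i, coord_lt hβ i⟩, hβ⟩
  refine ⟨Pi.single a (Pi.single b 1), ?_⟩
  funext x y
  simp [polyKerLinearMap, polyKer, Pi.single_apply, ite_apply, ite_mul, Finset.sum_ite_irrel, a, b]

lemma polyKer_swap (c : MIdx d n → MIdx d n → ℝ) (x y : EuclideanSpace ℝ (Fin d)) :
    polyKer (Function.swap c) x y = polyKer c y x := by
  unfold polyKer
  rw [Finset.sum_comm]
  simp only [Function.swap, mul_comm (∏ i, x i ^ _)]

lemma polyKer_symmetrize (c : MIdx d n → MIdx d n → ℝ) (x y : EuclideanSpace ℝ (Fin d)) :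
    polyKer ((1 / 2 : ℝ) • (c + Function.swap c)) x y = (polyKer c x y + polyKer c y x) / 2 := by
  have h : polyKer ((1 / 2 : ℝ) • (c + Function.swap c)) =
      (1 / 2 : ℝ) • (polyKer c + polyKer (Function.swap c)) := by
    change polyKerLinearMap d n _ = _
    rw [map_smul, map_add]
    rfl
  simp only [h, Pi.smul_apply, Pi.add_apply, polyKer_swap, smul_eq_mul]
  ring

lemma exists_symm_polyKer_near {k f : EuclideanSpace ℝ (Fin d) → EuclideanSpace ℝ (Fin d) → ℝ}
    {s : Set (EuclideanSpace ℝ (Fin d))} {δ : ℝ} (hk : ∀ x y, k x y = k y x)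
    (hf : f ∈ polyKerSpace d n) (hkf : ∀ x ∈ s, ∀ y ∈ s, |k x y - f x y| ≤ δ) :
    ∃ c : MIdx d n → MIdx d n → ℝ, (∀ a b, c a b = c b a) ∧
      ∀ x ∈ s, ∀ y ∈ s, |k x y - polyKer c x y| ≤ δ := by
  obtain ⟨c, rfl⟩ := hf
  refine ⟨(1 / 2 : ℝ) • (c + Function.swap c), fun a b => ?_, fun x hx y hy => ?_⟩
  · simp [Function.swap, add_comm]
  · have hxy : |k x y - polyKer c x y| ≤ δ := hkf x hx y hy
    have hyx : |k x y - polyKer c y x| ≤ δ := hk x y ▸ hkf y hy x hx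
    rw [polyKer_symmetrize]
    rw [abs_le] at hxy hyx ⊢
    constructor <;> linarith

end PolynomialKernels

section IntegralKernels

lemma integrable_of_continuousOn_of_ae_mem_isCompact {X F : Type*} [TopologicalSpace X]
    [T2Space X] [MeasurableSpace X] [OpensMeasurableSpace X] [NormedAddCommGroup F] {μ : Measure X}
    [IsFiniteMeasureOnCompacts μ] {S : Set X} (hS : IsCompact S) (hμ : ∀ᵐ x ∂μ, x ∈ S) {f : X → F}
    (hf : ContinuousOn f S) : Integrable f μ := by
  simpa only [IntegrableOn, Measure.restrict_eq_self_of_ae_mem hμ] using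
    hf.integrableOn_compact (μ := μ) hS

variable {d n m : ℕ}

-- The inner product is a linear form in the `2d` variables `(x, y)`, indexed by `Fin d ⊕ Fin d`,
-- with coefficients `(ω, -ω)`.
lemma inner_sub_pow_eq_sum_monomial (ω x y : EuclideanSpace ℝ (Fin d)) (m : ℕ) :
    ⟪ω, x - y⟫ ^ m = ∑ k ∈ Finset.piAntidiag (Finset.univ : Finset (Fin d ⊕ Fin d)) m,
      (Nat.multinomial Finset.univ k * ∏ j, Sum.elim ω (-ω) j ^ k j) *
        ((∏ i, x i ^ k (.inl i)) * ∏ i, y i ^ k (.inr i)) := by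
  have inner_eq_sum : ⟪ω, x - y⟫ = ∑ j, Sum.elim ω (-ω) j * Sum.elim x y j := by
    rw [inner_sub_right]
    simp [PiLp.inner_apply, mul_comm, sub_eq_add_neg]
  rw [inner_eq_sum, Finset.sum_pow_eq_sum_piAntidiag]
  simp only [mul_pow, Finset.prod_mul_distrib, Fintype.prod_sum_type, Sum.elim_inl, Sum.elim_inr,
    mul_assoc]

variable {μ : Measure (EuclideanSpace ℝ (Fin d))} {S : Set (EuclideanSpace ℝ (Fin d))}

lemma integral_inner_sub_pow_mem_polyKerSpace [IsFiniteMeasureOnCompacts μ] (hS : IsCompact S)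
    (hμ : ∀ᵐ ω ∂μ, ω ∈ S) (hmn : m ≤ n) :
    (fun x y => ∫ ω, ⟪ω, x - y⟫ ^ m ∂μ) ∈ polyKerSpace d n := by
  let coeff (k : Fin d ⊕ Fin d → ℕ) (ω : EuclideanSpace ℝ (Fin d)) : ℝ :=
    Nat.multinomial Finset.univ k * ∏ j, Sum.elim ω (-ω) j ^ k j
  have integrable_coeff (k) : Integrable (coeff k) μ := by
    refine integrable_of_continuousOn_of_ae_mem_isCompact hS hμ (Continuous.continuousOn ?_)
    simp only [coeff, Fintype.prod_sum_type, Sum.elim_inl, Sum.elim_inr, PiLp.neg_apply]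
    fun_prop
  have expansion : (fun x y => ∫ ω, ⟪ω, x - y⟫ ^ m ∂μ) =
      ∑ k ∈ Finset.piAntidiag Finset.univ m, (∫ ω, coeff k ω ∂μ) •
        fun x y : EuclideanSpace ℝ (Fin d) =>
          (∏ i, x i ^ k (.inl i)) * ∏ i, y i ^ k (.inr i) := by
    funext x y
    simp only [inner_sub_pow_eq_sum_monomial]
    rw [integral_finsetSum _ fun k _ => (integrable_coeff k).mul_const _]
    simp [integral_mul_const, coeff, Finset.sum_apply]
  rw [expansion]
  refine Submodule.sum_mem _ fun k hk => Submodule.smul_mem _ _ ?_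
  have degree_eq : ∑ i, k (.inl i) + ∑ i, k (.inr i) = m := by
    rw [← Fintype.sum_sum_type]
    exact (Finset.mem_piAntidiag.1 hk).1
  exact monomial_mem_polyKerSpace (by lia) (by lia)

lemma integral_eval_inner_sub_mem_polyKerSpace [IsFiniteMeasureOnCompacts μ] (hS : IsCompact S)
    (hμ : ∀ᵐ ω ∂μ, ω ∈ S) {q : Polynomial ℝ} (hq : q.natDegree ≤ n) :
    (fun x y => ∫ ω, q.eval ⟪ω, x - y⟫ ∂μ) ∈ polyKerSpace d n := by
  have expansion : (fun x y => ∫ ω, q.eval ⟪ω, x - y⟫ ∂μ) =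
      ∑ m ∈ Finset.range (n + 1), q.coeff m •
        fun x y : EuclideanSpace ℝ (Fin d) => ∫ ω, ⟪ω, x - y⟫ ^ m ∂μ := by
    funext x y
    have integrable_pow (m : ℕ) : Integrable (fun ω => ⟪ω, x - y⟫ ^ m) μ :=
      integrable_of_continuousOn_of_ae_mem_isCompact hS hμ (by fun_prop)
    simp only [Polynomial.eval_eq_sum_range' (Nat.lt_succ_of_le hq)]
    rw [integral_finsetSum _ fun m _ => (integrable_pow m).const_mul _]
    simp [integral_const_mul, Finset.sum_apply]
  rw [expansion]
  exact Submodule.sum_mem _ fun m hm => Submodule.smul_mem _ _ <|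
    integral_inner_sub_pow_mem_polyKerSpace hS hμ (Nat.le_of_lt_succ (Finset.mem_range.1 hm))

lemma abs_inner_sub_le {E : Type*} [NormedAddCommGroup E] [InnerProductSpace ℝ E] {ω x y : E}
    {R r : ℝ} (hω : ‖ω‖ ≤ R) (hx : ‖x‖ ≤ r) (hy : ‖y‖ ≤ r) : |⟪ω, x - y⟫| ≤ R * (2 * r) :=
  calc |⟪ω, x - y⟫| ≤ ‖ω‖ * ‖x - y‖ := abs_real_inner_le_norm ω (x - y)
    _ ≤ R * (2 * r) := by
      have := (norm_sub_le x y).trans (add_le_add hx hy)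
      gcongr
      · exact (norm_nonneg ω).trans hω
      · linarith

lemma exists_symm_polyKer_near_integral_comp_inner [IsFiniteMeasure μ] {R r δ : ℝ}
    (hμ : ∀ᵐ ω ∂μ, ‖ω‖ ≤ R) {φ : ℝ → ℝ} (hφ : Continuous φ) (hφ_even : φ.Even)
    {q : Polynomial ℝ} (hq : q.natDegree ≤ n)
    (hφq : ∀ t, |t| ≤ R * (2 * r) → |φ t - q.eval t| ≤ δ) :
    ∃ c : MIdx d n → MIdx d n → ℝ, (∀ a b, c a b = c b a) ∧
      ∀ x ∈ Metric.closedBall 0 r, ∀ y ∈ Metric.closedBall 0 r,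
        |(∫ ω, φ ⟪ω, x - y⟫ ∂μ) - polyKer c x y| ≤ δ * μ.real Set.univ := by
  have hμ_ball : ∀ᵐ ω ∂μ, ω ∈ Metric.closedBall 0 R := by
    simpa only [mem_closedBall_zero_iff] using hμ
  have hball : IsCompact (Metric.closedBall (0 : EuclideanSpace ℝ (Fin d)) R) :=
    isCompact_closedBall 0 R
  refine exists_symm_polyKer_near (fun x y => ?_)
    (integral_eval_inner_sub_mem_polyKerSpace hball hμ_ball hq) fun x hx y hy => ?_
  · simp only [← neg_sub y x, inner_neg_right, hφ_even _]
  · rw [mem_closedBall_zero_iff] at hx hy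
    have integrable_comp_inner {ψ : ℝ → ℝ} (hψ : Continuous ψ) :
        Integrable (fun ω => ψ ⟪ω, x - y⟫) μ :=
      integrable_of_continuousOn_of_ae_mem_isCompact hball hμ_ball (by fun_prop)
    rw [← integral_sub (integrable_comp_inner hφ) (integrable_comp_inner q.continuous),
      ← Real.norm_eq_abs]
    refine norm_integral_le_of_norm_le_const ?_
    filter_upwards [hμ] with ω hω
    exact hφq _ (abs_inner_sub_le hω hx hy)

end IntegralKernels

section CosineApproximation

-- Chernoff bound: the weight `exp (s * (m - N))` is at least `1` on the tail `m ≥ N`.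
lemma exp_sub_sum_range_le_exp {s T : ℝ} (hs : 0 ≤ s) (hT : 0 ≤ T) (N : ℕ) :
    Real.exp T - ∑ m ∈ Finset.range N, T ^ m / m.factorial ≤
      Real.exp (Real.exp s * T - s * N) := by
  have hasSum_exp (u : ℝ) : HasSum (fun m : ℕ => u ^ m / m.factorial) (Real.exp u) := by
    simpa only [Real.exp_eq_exp_ℝ] using NormedSpace.expSeries_div_hasSum_exp u
  have weight_le (m : ℕ) : T ^ (m + N) / (m + N).factorial ≤
      Real.exp (-(s * N)) * ((Real.exp s * T) ^ (m + N) / (m + N).factorial) := by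
    have h : Real.exp (-(s * N)) * Real.exp s ^ (m + N) = Real.exp (s * m) := by
      rw [← Real.exp_nat_mul, ← Real.exp_add]
      push_cast
      ring_nf
    calc T ^ (m + N) / (m + N).factorial
        ≤ Real.exp (s * m) * (T ^ (m + N) / (m + N).factorial) :=
          le_mul_of_one_le_left (by positivity) (Real.one_le_exp (by positivity))
      _ = _ := by rw [← h]; ring
  calc Real.exp T - ∑ m ∈ Finset.range N, T ^ m / m.factorial
      ≤ Real.exp (-(s * N)) * (Real.exp (Real.exp s * T) -
          ∑ m ∈ Finset.range N, (Real.exp s * T) ^ m / m.factorial) :=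
        hasSum_le weight_le ((hasSum_nat_add_iff' N).2 (hasSum_exp T))
          (((hasSum_nat_add_iff' N).2 (hasSum_exp _)).mul_left _)
    _ ≤ Real.exp (-(s * N)) * Real.exp (Real.exp s * T) := by
        gcongr
        exact sub_le_self _ (by positivity)
    _ = Real.exp (Real.exp s * T - s * N) := by rw [← Real.exp_add, neg_add_eq_sub]

lemma exists_polynomial_abs_cos_sub_eval_le (n : ℕ) :
    ∃ q : Polynomial ℝ, q.natDegree ≤ n ∧ ∀ t : ℝ, |Real.cos t - q.eval t| ≤
      Real.exp |t| - ∑ m ∈ Finset.range (n + 1), |t| ^ m / m.factorial := by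
  let q : Polynomial ℝ := ∑ m ∈ Finset.range (n + 1),
    Polynomial.C (Complex.I ^ m / (m.factorial : ℂ)).re * Polynomial.X ^ m
  have eval_q (t : ℝ) :
      q.eval t = (∑ m ∈ Finset.range (n + 1), (t * Complex.I) ^ m / (m.factorial : ℂ)).re := by
    rw [Polynomial.eval_finsetSum, Complex.re_sum]
    refine Finset.sum_congr rfl fun m _ => ?_
    rw [Polynomial.eval_C_mul, Polynomial.eval_pow, Polynomial.eval_X, ← Complex.re_mul_ofReal]
    push_cast
    ring_nf
  refine ⟨q, Polynomial.natDegree_sum_le_of_forall_le _ _ fun m hm => ?_, fun t => ?_⟩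
  · exact (Polynomial.natDegree_C_mul_X_pow_le _ m).trans
      (Nat.le_of_lt_succ (Finset.mem_range.1 hm))
  · rw [eval_q, ← Complex.exp_ofReal_mul_I_re, ← Complex.sub_re]
    simpa using (Complex.abs_re_le_norm _).trans
      (Complex.norm_exp_sub_sum_le_exp_norm_sub_sum (t * Complex.I) (n + 1))

lemma exists_polynomial_near_cos {n : ℕ} {R L : ℝ} (hn : 6 * R + L ≤ n + 1) :
    ∃ q : Polynomial ℝ, q.natDegree ≤ n ∧
      ∀ t, |t| ≤ 2 * R → |Real.cos t - q.eval t| ≤ Real.exp (-L) := by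
  obtain ⟨q, hq, hcos⟩ := exists_polynomial_abs_cos_sub_eval_le n
  refine ⟨q, hq, fun t ht => (hcos t).trans ?_⟩
  refine (exp_sub_sum_range_le_exp zero_le_one (abs_nonneg t) (n + 1)).trans ?_
  have : Real.exp 1 * |t| ≤ 3 * (2 * R) := by
    gcongr
    exact Real.exp_one_lt_three.le
  rw [Real.exp_le_exp]
  push_cast
  linarith

end CosineApproximation

lemma six_mul_add_le_floor_add_one {R L : ℝ} (hL : 0 ≤ L) :
    6 * R + L ≤ ⌊36 * (R ^ 2 + L)⌋₊ + 1 := by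
  have amgm : 6 * R ≤ 18 * R ^ 2 + 1 / 2 := by nlinarith [sq_nonneg (6 * R - 1)]
  have lt_floor := Nat.lt_floor_add_one (36 * (R ^ 2 + L))
  linarith [Nat.cast_nonneg (α := ℝ) ⌊36 * (R ^ 2 + L)⌋₊]

theorem stmt_12_general :
    ∃ C : ℝ, 0 < C ∧
      ∀ (d : ℕ) (μ : Measure (EuclideanSpace ℝ (Fin d))), IsFiniteMeasure μ →
        ∀ R : ℝ, (∀ᵐ ω ∂μ, ‖ω‖ ≤ R) →
          ∀ ε : ℝ, 0 < ε → ε < 1 →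
            ∃ n : ℕ, (n : ℝ) ≤ C * (R ^ 2 + Real.log (1 / ε)) ∧
              ∃ c : MIdx d n → MIdx d n → ℝ, (∀ a b, c a b = c b a) ∧
                ∀ x y : EuclideanSpace ℝ (Fin d), ‖x‖ ≤ 1 → ‖y‖ ≤ 1 →
                  |(∫ ω, Real.cos ⟪ω, x - y⟫ ∂μ) - polyKer c x y| ≤ ε * μ.real Set.univ := by
  refine ⟨36, by norm_num, fun d μ _ R hμ ε hε hε1 => ?_⟩
  set L := Real.log (1 / ε) with hL
  have hL_nonneg : 0 ≤ L := Real.log_nonneg (one_le_one_div hε hε1.le)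
  have hexp : Real.exp (-L) = ε := by rw [hL, one_div, Real.log_inv, neg_neg, Real.exp_log hε]
  obtain ⟨q, hq, hcos⟩ :=
    exists_polynomial_near_cos (six_mul_add_le_floor_add_one (R := R) hL_nonneg)
  obtain ⟨c, hc_symm, hc⟩ := exists_symm_polyKer_near_integral_comp_inner (r := 1) hμ
    Real.continuous_cos Real.cos_neg hq fun t ht => hcos t (by linarith)
  refine ⟨_, Nat.floor_le (by positivity), c, hc_symm, fun x y hx hy => ?_⟩
  rw [← hexp]
  exact hc x (mem_closedBall_zero_iff.2 hx) y (mem_closedBall_zero_iff.2 hy)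

/-- **Compactly supported Fourier transform implies polynomial approximation.** There is
a universal constant `C > 0` such that: if `μ` is a Borel probability measure on `ℝ^d`
supported in the closed ball of radius `R` and `K(x,y) = ∫ cos⟪ω, x-y⟫ dμ(ω)`, then for
every `ε ∈ (0,1)` there is a symmetric polynomial kernel `P` of degree at most
`C·(R² + log(1/ε))` with `|K(x,y) - P(x,y)| ≤ ε` for all `x, y` in the unit ball. -/
theorem stmt_12 :
    ∃ C : ℝ, 0 < C ∧
      ∀ (d : ℕ) (μ : Measure (EuclideanSpace ℝ (Fin d))), IsProbabilityMeasure μ →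
        ∀ R : ℝ, 0 ≤ R → (∀ᵐ ω ∂μ, ‖ω‖ ≤ R) →
          ∀ ε : ℝ, 0 < ε → ε < 1 →
            ∃ n : ℕ, (n : ℝ) ≤ C * (R ^ 2 + Real.log (1 / ε)) ∧
              ∃ c : MIdx d n → MIdx d n → ℝ, (∀ a b, c a b = c b a) ∧
                ∀ x y : EuclideanSpace ℝ (Fin d), ‖x‖ ≤ 1 → ‖y‖ ≤ 1 →
                  |(∫ ω, Real.cos ⟪ω, x - y⟫ ∂μ) - polyKer c x y| ≤ ε := by
  obtain ⟨C, hC, h⟩ := stmt_12_general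
  exact ⟨C, hC, fun d μ _ R _ hμ ε hε hε1 => by simpa using h d μ inferInstance R hμ ε hε hε1⟩
end

section
/- Let d ≥ 1 and n ∈ ℕ, and let V = {x ∈ ℝ^d : ‖x‖² = 1} be the unit sphere. Then HF_V(n) = C(n + d − 1, d − 1) + C(n + d − 2, d − 1), where C(·,·) denotes the binomial coefficient (with the convention C(d−2, d−1) = 0 when n = 0). -/
/-- The linear map sending a real polynomial in `d` variables to its restriction
(as a function) to a subset `V` of `ℝ^d` (with the Euclidean structure). -/
noncomputable def restrictEval {d : ℕ} (V : Set (EuclideanSpace ℝ (Fin d))) :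
    MvPolynomial (Fin d) ℝ →ₗ[ℝ] (↥V → ℝ) where
  toFun p := fun x => MvPolynomial.eval (fun i => (x : EuclideanSpace ℝ (Fin d)) i) p
  map_add' p q := by funext x; simp
  map_smul' c p := by funext x; simp [MvPolynomial.smul_eval]

/-- The Hilbert function of `V ⊆ ℝ^d`: the dimension of the space of functions `V → ℝ`
arising as restrictions to `V` of polynomials of total degree at most `n`. -/
noncomputable def HF {d : ℕ} (V : Set (EuclideanSpace ℝ (Fin d))) (n : ℕ) : ℕ :=
  Module.finrank ℝ ↥((MvPolynomial.restrictTotalDegree (Fin d) ℝ n).map (restrictEval V))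

/-!
On the sphere `x₀² = 1 - x₁² - ⋯ - xₘ²`, so every even power of `x₀` can be traded for a polynomial
of at most the same degree in the remaining variables. Hence every polynomial of degree at most `n`
agrees on the sphere with some `p + x₀ q`, where `p` and `q` involve only `x₁, …, xₘ`,
`deg p ≤ n` and `deg q < n`. The pair `(p, q)` is unique: a point `y` of the open unit ball lies
below two points `(±t, y)` of the sphere, and `p(y) ± t q(y) = 0` forces `p(y) = q(y) = 0`.
So `HF(n)` is a sum of two dimensions of spaces of polynomials in `m` variables. All of this works
for the hypersurface `x₀² = g(x₁, …, xₘ)` whenever `deg g ≤ 2` and `g` is positive somewhere.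
-/

open MvPolynomial Topology

section Dimension

theorem finrank_submodule_prod {R M N : Type*} [Ring R] [StrongRankCondition R] [AddCommGroup M]
    [Module R M] [AddCommGroup N] [Module R N] (A : Submodule R M) (B : Submodule R N)
    [Module.Free R A] [Module.Free R B] [Module.Finite R A] [Module.Finite R B] :
    Module.finrank R (A.prod B) = Module.finrank R A + Module.finrank R B := by
  have hrange : A.prod B = LinearMap.range (A.subtype.prodMap B.subtype) := by
    rw [LinearMap.range_prodMap, A.range_subtype, B.range_subtype]
  rw [hrange, LinearMap.finrank_range_of_inj (A.injective_subtype.prodMap B.injective_subtype),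
    Module.finrank_prod]

theorem natCard_finsupp_degree_le (σ : Type*) [Fintype σ] (n : ℕ) :
    Nat.card {s : σ →₀ ℕ | s.degree ≤ n} = (n + Fintype.card σ).choose (Fintype.card σ) := by
  classical
  have hunion : {s : σ →₀ ℕ | s.degree ≤ n} =
      ((Finset.range (n + 1)).biUnion (Finset.finsuppAntidiag Finset.univ) : Finset (σ →₀ ℕ)) := by
    ext s
    simp [Finsupp.degree_eq_sum]
  have hdisj : Set.PairwiseDisjoint (Finset.range (n + 1) : Set ℕ)
      (Finset.finsuppAntidiag (Finset.univ : Finset σ)) := by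
    intro i _ j _ hij
    refine Finset.disjoint_left.2 fun s hi hj => hij ?_
    exact (Finset.mem_finsuppAntidiag.1 hi).1.symm.trans (Finset.mem_finsuppAntidiag.1 hj).1
  rw [hunion, Nat.card_coe_set_eq, Set.ncard_coe_finset, Finset.card_biUnion hdisj]
  simp only [Finset.card_finsuppAntidiag_nat_eq_multichoose, Finset.card_univ,
    Nat.sum_range_multichoose]

variable (σ R : Type*) [CommSemiring R]

/-- The polynomials of total degree less than `n`. The strict bound makes this the zero space for
`n = 0`, so that it is the space of polynomials of total degree at most `n - 1` for every `n`. -/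
noncomputable def totalDegreeLT (n : ℕ) : Submodule R (MvPolynomial σ R) :=
  restrictSupport R {s | s.degree < n}

theorem totalDegreeLT_zero : totalDegreeLT σ R 0 = ⊥ := by
  simp [totalDegreeLT, restrictSupport_eq_span]

theorem totalDegreeLT_succ (n : ℕ) : totalDegreeLT σ R (n + 1) = restrictTotalDegree σ R n := by
  simp only [totalDegreeLT, restrictTotalDegree, Nat.lt_succ_iff, Finsupp.degree_apply,
    Finsupp.sum]

variable {σ R} in
theorem mem_totalDegreeLT {n : ℕ} {p : MvPolynomial σ R} :
    p ∈ totalDegreeLT σ R n ↔ p = 0 ∨ p.totalDegree < n := by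
  cases n with
  | zero => simp [totalDegreeLT_zero]
  | succ n =>
    rw [totalDegreeLT_succ, mem_restrictTotalDegree, Nat.lt_succ_iff]
    exact ⟨.inr, by rintro (rfl | h) <;> simp [*]⟩

instance [Finite σ] (n : ℕ) : Module.Finite R (totalDegreeLT σ R n) :=
  have : Finite {s : σ →₀ ℕ | s.degree < n} := Finsupp.finite_of_degree_lt n
  .of_basis (basisRestrictSupport R {s : σ →₀ ℕ | s.degree < n})

instance (n : ℕ) : Module.Free R (totalDegreeLT σ R n) :=
  .of_basis (basisRestrictSupport R {s : σ →₀ ℕ | s.degree < n})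

theorem finrank_restrictTotalDegree [StrongRankCondition R] [Fintype σ] (n : ℕ) :
    Module.finrank R (restrictTotalDegree σ R n) =
      (n + Fintype.card σ).choose (Fintype.card σ) :=
  (Module.finrank_eq_nat_card_basis (basisRestrictSupport R _)).trans
    (natCard_finsupp_degree_le σ n)

theorem finrank_totalDegreeLT [StrongRankCondition R] [Fintype σ] (n : ℕ) :
    Module.finrank R (totalDegreeLT σ R n) =
      if n = 0 then 0 else (n - 1 + Fintype.card σ).choose (Fintype.card σ) := by
  cases n with
  | zero =>
    have := nontrivial_of_invariantBasisNumber R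
    rw [totalDegreeLT_zero, finrank_bot, if_pos rfl]
  | succ n =>
    rw [totalDegreeLT_succ, finrank_restrictTotalDegree, if_neg n.succ_ne_zero, Nat.add_sub_cancel]

end Dimension

section FirstVariable

variable {R : Type*} [CommSemiring R] {m : ℕ}

variable (R m) in
/-- The linear map `(p, q) ↦ p(x₁, …, xₘ) + x₀ q(x₁, …, xₘ)`, parametrizing the polynomials of
degree at most one in the first variable. -/
noncomputable def addFirstVarMul :
    MvPolynomial (Fin m) R × MvPolynomial (Fin m) R →ₗ[R] MvPolynomial (Fin (m + 1)) R :=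
  (rename Fin.succ).toLinearMap.coprod (LinearMap.mulLeft R (X 0) ∘ₗ (rename Fin.succ).toLinearMap)

theorem addFirstVarMul_apply (p q : MvPolynomial (Fin m) R) :
    addFirstVarMul R m (p, q) = rename Fin.succ p + X 0 * rename Fin.succ q := by
  simp [addFirstVarMul]

theorem eval_addFirstVarMul (p q : MvPolynomial (Fin m) R) (x : Fin (m + 1) → R) :
    eval x (addFirstVarMul R m (p, q)) =
      eval (fun i => x i.succ) p + x 0 * eval (fun i => x i.succ) q := by
  simp [addFirstVarMul_apply, eval_rename, Function.comp_def]

theorem map_addFirstVarMul_le (n : ℕ) :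
    ((restrictTotalDegree (Fin m) R n).prod (totalDegreeLT (Fin m) R n)).map (addFirstVarMul R m) ≤
      restrictTotalDegree (Fin (m + 1)) R n := by
  rw [Submodule.map_le_iff_le_comap]
  rintro ⟨p, q⟩ ⟨hp, hq⟩
  rw [Submodule.mem_comap, addFirstVarMul_apply]
  refine add_mem ?_ ?_ <;> rw [mem_restrictTotalDegree]
  · exact (totalDegree_rename_le _ _).trans ((mem_restrictTotalDegree _ _ _).1 hp)
  · obtain rfl | hq := mem_totalDegreeLT.1 hq
    · simp
    · have hX : (X 0 : MvPolynomial (Fin (m + 1)) R).totalDegree ≤ 1 :=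
        (totalDegree_monomial_le _ _).trans (by simp)
      have hmul := totalDegree_mul (X 0 : MvPolynomial (Fin (m + 1)) R) (rename Fin.succ q)
      have hrename := totalDegree_rename_le Fin.succ q
      lia

end FirstVariable

theorem eq_zero_of_eventually_eval_eq_zero {σ R : Type*} [CommRing R] [IsDomain R]
    [TopologicalSpace R] [T1Space R] [PerfectSpace R] {p : MvPolynomial σ R} {a : σ → R}
    (h : ∀ᶠ y in 𝓝 a, eval y p = 0) : p = 0 := by
  rw [nhds_pi, Filter.Eventually, Filter.mem_pi] at h
  obtain ⟨I, -, t, ht, hsub⟩ := h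
  refine funext_set t (fun i => infinite_of_mem_nhds (a i) (ht i)) fun y hy => ?_
  rw [map_zero]
  exact hsub fun i _ => hy i trivial

theorem restrictEval_apply {d : ℕ} (V : Set (EuclideanSpace ℝ (Fin d)))
    (p : MvPolynomial (Fin d) ℝ) (x : V) : restrictEval V p x = eval (fun i => x.1 i) p :=
  rfl

/-- The hypersurface `x₀² = g(x₁, …, xₘ)`, a double cover of `{g ≥ 0}` branched along `{g = 0}`. -/
def doubleCover {m : ℕ} (g : MvPolynomial (Fin m) ℝ) : Set (EuclideanSpace ℝ (Fin (m + 1))) :=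
  {x | x 0 ^ 2 = eval (fun i => x i.succ) g}

section DoubleCover

variable {m : ℕ} {g : MvPolynomial (Fin m) ℝ}

theorem restrictEval_addFirstVarMul {V : Set (EuclideanSpace ℝ (Fin (m + 1)))}
    (p q : MvPolynomial (Fin m) ℝ) (x : V) :
    restrictEval V (addFirstVarMul ℝ m (p, q)) x =
      eval (fun i => x.1 i.succ) p + x.1 0 * eval (fun i => x.1 i.succ) q := by
  rw [restrictEval_apply, eval_addFirstVarMul]

theorem injective_restrictEval_comp_addFirstVarMul {a : Fin m → ℝ} (ha : 0 < eval a g) :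
    Function.Injective (restrictEval (doubleCover g) ∘ₗ addFirstVarMul ℝ m) := by
  rw [injective_iff_map_eq_zero]
  rintro ⟨p, q⟩ hpq
  have eval_lift (y : Fin m → ℝ) (t : ℝ) (ht : t ^ 2 = eval y g) :
      eval y p + t * eval y q = 0 := by
    have hmem : WithLp.toLp 2 (Fin.cons t y : Fin (m + 1) → ℝ) ∈ doubleCover g := by
      simpa [doubleCover] using ht
    simpa [restrictEval_addFirstVarMul] using congrFun hpq ⟨_, hmem⟩
  have eval_eq_zero (y : Fin m → ℝ) (hy : 0 < eval y g) : eval y p = 0 ∧ eval y q = 0 := by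
    have hpos := eval_lift y √(eval y g) (Real.sq_sqrt hy.le)
    have hneg := eval_lift y (-√(eval y g)) (by rw [neg_sq, Real.sq_sqrt hy.le])
    have hmul : √(eval y g) * eval y q = 0 := by linarith
    exact ⟨by linarith, (mul_eq_zero.1 hmul).resolve_left (Real.sqrt_pos.2 hy).ne'⟩
  have hnhds : ∀ᶠ y in 𝓝 a, 0 < eval y g := (continuous_eval g).continuousAt.eventually_const_lt ha
  exact Prod.ext
    (eq_zero_of_eventually_eval_eq_zero (hnhds.mono fun y hy => (eval_eq_zero y hy).1))
    (eq_zero_of_eventually_eval_eq_zero (hnhds.mono fun y hy => (eval_eq_zero y hy).2))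

/-- The polynomial `g ^ ⌊s₀ / 2⌋ x₁^s₁ ⋯ xₘ^sₘ`, which is what is left of the monomial `x^s` once
`x₀²` has been replaced by `g` as often as possible and the remaining `x₀ ^ (s₀ mod 2)` dropped. -/
noncomputable def reducedMonomial (g : MvPolynomial (Fin m) ℝ) (s : Fin (m + 1) →₀ ℕ) :
    MvPolynomial (Fin m) ℝ :=
  g ^ (s 0 / 2) * monomial s.tail 1

theorem totalDegree_reducedMonomial_add_le (hg : g.totalDegree ≤ 2) (s : Fin (m + 1) →₀ ℕ) :
    (reducedMonomial g s).totalDegree + s 0 % 2 ≤ s.degree := by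
  have hpow : (g ^ (s 0 / 2)).totalDegree ≤ s 0 / 2 * 2 :=
    (totalDegree_pow g _).trans (Nat.mul_le_mul_left _ hg)
  have htail : (monomial s.tail (1 : ℝ)).totalDegree ≤ s.tail.degree := totalDegree_monomial_le _ _
  have hdegree : s.degree = s 0 + s.tail.degree := by
    simp only [Finsupp.degree_eq_sum, Fin.sum_univ_succ, Finsupp.tail_apply]
  have hmul : (reducedMonomial g s).totalDegree ≤ _ := totalDegree_mul _ _
  lia

theorem restrictEval_monomial (s : Fin (m + 1) →₀ ℕ) (x : doubleCover g) :
    restrictEval (doubleCover g) (monomial s 1) x =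
      x.1 0 ^ (s 0 % 2) * eval (fun i => x.1 i.succ) (reducedMonomial g s) := by
  have hx : x.1 0 ^ 2 = eval (fun i => x.1 i.succ) g := x.2
  have hpow : x.1 0 ^ s 0 = x.1 0 ^ (s 0 % 2) * (x.1 0 ^ 2) ^ (s 0 / 2) := by
    rw [← pow_mul, ← pow_add, Nat.mod_add_div]
  rw [restrictEval_apply, reducedMonomial, map_mul, map_pow, ← hx, eval_monomial, eval_monomial,
    Finsupp.prod_fintype _ _ fun _ => pow_zero _, Finsupp.prod_fintype _ _ fun _ => pow_zero _,
    Fin.prod_univ_succ, hpow]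
  simp only [Finsupp.tail_apply]
  ring

theorem map_restrictEval_restrictTotalDegree (hg : g.totalDegree ≤ 2) (n : ℕ) :
    (restrictTotalDegree (Fin (m + 1)) ℝ n).map (restrictEval (doubleCover g)) =
      ((restrictTotalDegree (Fin m) ℝ n).prod (totalDegreeLT (Fin m) ℝ n)).map
        (restrictEval (doubleCover g) ∘ₗ addFirstVarMul ℝ m) := by
  apply le_antisymm
  · conv_lhs => rw [restrictTotalDegree, restrictSupport_eq_span]
    rw [Submodule.map_span_le]
    rintro _ ⟨s, hs : s.degree ≤ n, rfl⟩
    have hdegree := (totalDegree_reducedMonomial_add_le hg s).trans hs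
    obtain hparity | hparity := Nat.mod_two_eq_zero_or_one (s 0)
    · refine ⟨(reducedMonomial g s, 0), ⟨?_, zero_mem _⟩, ?_⟩
      · exact (mem_restrictTotalDegree _ _ _).2 (by lia)
      ext x
      simp [restrictEval_addFirstVarMul, restrictEval_monomial, hparity]
    · refine ⟨(0, reducedMonomial g s), ⟨zero_mem _, mem_totalDegreeLT.2 (.inr (by lia))⟩, ?_⟩
      ext x
      simp [restrictEval_addFirstVarMul, restrictEval_monomial, hparity]
  · rw [Submodule.map_comp]
    exact Submodule.map_mono (map_addFirstVarMul_le n)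

theorem HF_doubleCover (hg : g.totalDegree ≤ 2) {a : Fin m → ℝ} (ha : 0 < eval a g) (n : ℕ) :
    HF (doubleCover g) n = (n + m).choose m + if n = 0 then 0 else (n - 1 + m).choose m := by
  have hinj := injective_restrictEval_comp_addFirstVarMul ha
  rw [HF, map_restrictEval_restrictTotalDegree hg,
    ← (Submodule.equivMapOfInjective _ hinj _).finrank_eq,
    finrank_submodule_prod, finrank_restrictTotalDegree, finrank_totalDegreeLT, Fintype.card_fin]

end DoubleCover

theorem setOf_norm_sq_eq_one_eq_doubleCover (m : ℕ) :
    {x : EuclideanSpace ℝ (Fin (m + 1)) | ‖x‖ ^ 2 = 1} = doubleCover (1 - ∑ i, X i ^ 2) := by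
  ext x
  simp [doubleCover, EuclideanSpace.real_norm_sq_eq, Fin.sum_univ_succ, eq_sub_iff_add_eq]

theorem totalDegree_one_sub_sum_sq_le {σ R : Type*} [Fintype σ] [CommRing R] :
    (1 - ∑ i, X i ^ 2 : MvPolynomial σ R).totalDegree ≤ 2 := by
  refine (totalDegree_sub _ _).trans (max_le (by simp) (totalDegree_finsetSum_le fun i _ => ?_))
  rw [X_pow_eq_monomial]
  exact (totalDegree_monomial_le _ _).trans (by simp)

/-- **Hilbert function of the unit sphere.** For `d ≥ 1`, the unit sphere
`V = {x ∈ ℝ^d : ‖x‖² = 1}` has `HF_V(n) = C(n+d-1, d-1) + C(n+d-2, d-1)`, with the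
convention that the second term is `0` when `n = 0`. -/
theorem stmt_18 (d n : ℕ) (hd : 1 ≤ d) :
    HF {x : EuclideanSpace ℝ (Fin d) | ‖x‖ ^ 2 = 1} n =
      Nat.choose (n + d - 1) (d - 1) +
        (if n = 0 then 0 else Nat.choose (n + d - 2) (d - 1)) := by
  obtain ⟨m, rfl⟩ := Nat.exists_eq_add_of_le' hd
  have hpos : 0 < eval (0 : Fin m → ℝ) (1 - ∑ i, X i ^ 2) := by simp
  rw [setOf_norm_sq_eq_one_eq_doubleCover, HF_doubleCover totalDegree_one_sub_sum_sq_le hpos,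
    Nat.add_sub_cancel, ← Nat.add_assoc, Nat.add_sub_cancel]
  split_ifs with hn
  · rfl
  · rw [show n + m + 1 - 2 = n - 1 + m by lia]
end
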